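/- Let X and Y be nonempty finite sets, μ: X → ℝ and ν: Y → ℝ strictly positive weight functions, c: X × Y → ℝ a cost, ε > 0, and φ₁, φ₂ entropy functions satisfying Assumption A. Let 𝒥 be a partition of X into nonempty subsets, and let π: X × Y → ℝ≥0 be a nonnegative plan such that for every cell X_J ∈ 𝒥, the restriction π|_{X_J × Y} is the minimizer of the cell subproblem E_J(·| ν_{-J}) with ν_{-J}(y) := Σ_{x ∉ X_J} π(x,y). Then π is the unique global minimizer over nonnegative plans of E(π) := Σ_{x,y} c(x,y)π(x,y) + ε·KL(π | μ ⊗ ν) + D_{φ₁}(P_X π | μ) + D_{φ₂}(P_Y π | ν). -/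

import Mathlib

open Filter Topology
open scoped Classical

noncomputable section

/-- `φ : ℝ → ℝ ∪ {+∞}` is an entropy function: lower semicontinuous, convex,
`dom(φ) ⊆ [0,∞)`, `dom(φ)\{0} ≠ ∅`, never taking the value `-∞`. -/
def IsEntropyFn (φ : ℝ → EReal) : Prop :=
  LowerSemicontinuous φ ∧
  (∀ x y a b : ℝ, 0 ≤ a → 0 ≤ b → a + b = 1 →
      φ (a * x + b * y) ≤ (a : EReal) * φ x + (b : EReal) * φ y) ∧
  (∀ x : ℝ, φ x ≠ ⊥) ∧
  (∀ x : ℝ, φ x < ⊤ → 0 ≤ x) ∧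
  (∃ x : ℝ, x ≠ 0 ∧ φ x < ⊤)

/-- The recession slope `φ'_∞ = lim_{x→∞} φ(x)/x`. -/
def recessionSlope (φ : ℝ → EReal) : EReal :=
  Filter.limsup (fun x : ℝ => φ x * ((x⁻¹ : ℝ) : EReal)) Filter.atTop

/-- The `φ`-divergence on a finite set `Z`:
`D_φ(ρ|σ) = ∑_{z : σ z > 0} σ z · φ(ρ z / σ z) + φ'_∞ · ∑_{z : σ z = 0} ρ z`. -/
def divergence {Z : Type*} [Fintype Z] (φ : ℝ → EReal) (ρ σ : Z → ℝ) : EReal :=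
  (∑ z, if 0 < σ z then (σ z : EReal) * φ (ρ z / σ z) else 0)
    + recessionSlope φ * ((∑ z, if σ z = 0 then ρ z else 0 : ℝ) : EReal)

/-- The convex conjugate `φ*(z) = sup_{x ∈ ℝ} (z·x − φ(x))`. -/
def conjFn (φ : ℝ → EReal) (z : ℝ) : EReal :=
  ⨆ x : ℝ, (((z * x : ℝ) : EReal) - φ x)

/-- Kullback–Leibler divergence on a finite set, with `0·log 0 = 0`:
`KL(ρ|σ) = ∑ z (ρ z log(ρ z/σ z) − ρ z + σ z)` if `ρ ≪ σ`, else `+∞`. -/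
def KLfin {Z : Type*} [Fintype Z] (ρ σ : Z → ℝ) : EReal :=
  if ∀ z, σ z = 0 → ρ z = 0 then
    ((∑ z, (ρ z * Real.log (ρ z / σ z) - ρ z + σ z) : ℝ) : EReal)
  else ⊤

/-- Assumption A: the entropy function `φ` is nonnegative, finite on `[0,∞)`,
and continuously differentiable on the interior `(0,∞)` of its domain. -/
def AssumptionA (φ : ℝ → EReal) : Prop :=
  IsEntropyFn φ ∧ (∀ x : ℝ, 0 ≤ φ x) ∧ (∀ x : ℝ, 0 ≤ x → φ x ≠ ⊤) ∧
  ContDiffOn ℝ 1 (fun s : ℝ => (φ s).toReal) (Set.Ioi (0 : ℝ))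

/-- Primal objective of the unbalanced (cell) problem with `Y`-submarginal `νm`:
`E_J(π|νm) = ⟨c, π⟩ + ε KL(π | μ⊗ν) + D_{φ₁}(P_X π | μ) + D_{φ₂}(P_Y π + νm | ν)`. -/
def EJfun {W Y : Type*} [Fintype W] [Fintype Y]
    (c : W → Y → ℝ) (ε : ℝ) (φ₁ φ₂ : ℝ → EReal)
    (μ : W → ℝ) (ν : Y → ℝ) (νm : Y → ℝ) (π : W → Y → ℝ) : EReal :=
  ((∑ x, ∑ y, c x y * π x y : ℝ) : EReal)
    + (ε : EReal) * KLfin (fun p : W × Y => π p.1 p.2) (fun p : W × Y => μ p.1 * ν p.2)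
    + divergence φ₁ (fun x => ∑ y, π x y) μ
    + divergence φ₂ (fun y => (∑ x, π x y) + νm y) ν

/-- Dual objective of the unbalanced (cell) problem with `Y`-submarginal `νm`. -/
def DJfun {W Y : Type*} [Fintype W] [Fintype Y]
    (c : W → Y → ℝ) (ε : ℝ) (φ₁ φ₂ : ℝ → EReal)
    (μ : W → ℝ) (ν : Y → ℝ) (νm : Y → ℝ) (α : W → ℝ) (β : Y → ℝ) : EReal :=
  ((ε * ∑ x, ∑ y, (1 - Real.exp ((α x + β y - c x y) / ε)) * (μ x * ν y) : ℝ) : EReal)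
    - (∑ x, (μ x : EReal) * conjFn φ₁ (-(α x)))
    - (∑ y, (ν y : EReal) * conjFn φ₂ (-(β y)))
    - ((∑ y, β y * νm y : ℝ) : EReal)

/-- The `Y`-submarginal `ν_{-J}` of the plan `π` outside the cell `J`:
`ν_{-J}(y) = ∑_{x ∉ J} π(x,y)`. -/
def outMarg {X Y : Type*} [Fintype X] (J : Set X) (π : X → Y → ℝ) : Y → ℝ :=
  fun y => ∑ x, (Jᶜ).indicator (fun x' => π x' y) x

/-- The global unbalanced objective
`E(π) = ⟨c, π⟩ + ε KL(π|μ⊗ν) + D_{φ₁}(P_X π|μ) + D_{φ₂}(P_Y π|ν)`. -/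
def Eglobal {X Y : Type*} [Fintype X] [Fintype Y]
    (c : X → Y → ℝ) (ε : ℝ) (φ₁ φ₂ : ℝ → EReal)
    (μ : X → ℝ) (ν : Y → ℝ) (π : X → Y → ℝ) : EReal :=
  EJfun c ε φ₁ φ₂ μ ν (fun _ => 0) π

/-!
The objective is a sum of convex functions of the single rows of the plan plus the penalty on the
second marginal, which is the only term coupling the rows. The Kullback-Leibler term has infinite
slope at `0`, so a plan that is optimal in every row is strictly positive, and there the coupling
penalty is differentiable. The first-order conditions of the rows then involve one common
linearisation of the penalty, and adding them up gives the first-order condition of the whole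
plan, which is sufficient by convexity. Uniqueness is strict convexity of the Kullback-Leibler term.
-/

section Convexity

variable {ι : Type*} {V : ι → Type*} [∀ i, AddCommGroup (V i)] [∀ i, Module ℝ (V i)]
  {S : ∀ i, Set (V i)} {f : ∀ i, V i → ℝ}

lemma convexOn_comp_update [DecidableEq ι] {g : (∀ i, V i) → ℝ}
    (hg : ConvexOn ℝ (Set.univ.pi S) g) {x : ∀ i, V i} (hx : x ∈ Set.univ.pi S) (i : ι) :
    ConvexOn ℝ (S i) fun v => g (Function.update x i v) := by
  have hmem : ∀ v ∈ S i, Function.update x i v ∈ Set.univ.pi S := fun v hv =>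
    Set.update_mem_pi_iff_of_mem hx |>.2 fun _ => hv
  have hcomb : ∀ (a b : ℝ) (u v : V i), a + b = 1 → Function.update x i (a • u + b • v) =
      a • Function.update x i u + b • Function.update x i v := fun a b u v hab => by
    rw [← Function.update_smul, ← Function.update_smul, ← Function.update_add, ← add_smul, hab,
      one_smul]
  refine ⟨fun u hu v hv a b ha hb hab => ?_, fun u hu v hv a b ha hb hab => ?_⟩
  · have h := hg.1 (hmem u hu) (hmem v hv) ha hb hab
    rw [← hcomb a b u v hab] at h
    simpa only [Function.update_self] using h i trivial
  · beta_reduce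
    rw [hcomb a b u v hab]
    exact hg.2 (hmem u hu) (hmem v hv) ha hb hab

variable [Fintype ι]

lemma convexOn_pi_sum (hf : ∀ i, ConvexOn ℝ (S i) (f i)) :
    ConvexOn ℝ (Set.univ.pi S) fun x => ∑ i, f i (x i) := by
  refine ⟨convex_pi fun i _ => (hf i).1, fun x hx y hy a b ha hb hab => ?_⟩
  simp only [smul_eq_mul, Finset.mul_sum, ← Finset.sum_add_distrib]
  exact Finset.sum_le_sum fun i _ => (hf i).2 (hx i trivial) (hy i trivial) ha hb hab

lemma strictConvexOn_pi_sum (hf : ∀ i, StrictConvexOn ℝ (S i) (f i)) :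
    StrictConvexOn ℝ (Set.univ.pi S) fun x => ∑ i, f i (x i) := by
  refine ⟨convex_pi fun i _ => (hf i).1, fun x hx y hy hxy a b ha hb hab => ?_⟩
  obtain ⟨i, hi⟩ := Function.ne_iff.1 hxy
  simp only [smul_eq_mul, Finset.mul_sum, ← Finset.sum_add_distrib]
  exact Finset.sum_lt_sum
    (fun j _ => (hf j).convexOn.2 (hx j trivial) (hy j trivial) ha.le hb.le hab)
    ⟨i, Finset.mem_univ i, (hf i).2 (hx i trivial) (hy i trivial) hi ha hb hab⟩

lemma convexOn_mul_comp_div {f : ℝ → ℝ} (hf : ConvexOn ℝ (Set.Ici 0) f) {m : ℝ} (hm : 0 ≤ m) :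
    ConvexOn ℝ (Set.Ici 0) fun s => m * f (s / m) := by
  refine ⟨convex_Ici 0, fun s hs t ht a b ha hb hab => ?_⟩
  have h := hf.2 (div_nonneg hs hm) (div_nonneg ht hm) ha hb hab
  simp only [smul_eq_mul] at h ⊢
  calc m * f ((a * s + b * t) / m) = m * f (a * (s / m) + b * (t / m)) := by ring_nf
    _ ≤ m * (a * f (s / m) + b * f (t / m)) := mul_le_mul_of_nonneg_left h hm
    _ = a * (m * f (s / m)) + b * (m * f (t / m)) := by ring

lemma strictConvexOn_mul_comp_div {f : ℝ → ℝ} (hf : StrictConvexOn ℝ (Set.Ici 0) f) {m : ℝ}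
    (hm : 0 < m) : StrictConvexOn ℝ (Set.Ici 0) fun s => m * f (s / m) := by
  refine ⟨convex_Ici 0, fun s hs t ht hst a b ha hb hab => ?_⟩
  have h := hf.2 (div_nonneg hs hm.le) (div_nonneg ht hm.le)
    (fun h => hst ((div_left_inj' hm.ne').1 h)) ha hb hab
  simp only [smul_eq_mul] at h ⊢
  calc m * f ((a * s + b * t) / m) = m * f (a * (s / m) + b * (t / m)) := by ring_nf
    _ < m * (a * f (s / m) + b * f (t / m)) := mul_lt_mul_of_pos_left h hm
    _ = a * (m * f (s / m)) + b * (m * f (t / m)) := by ring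

end Convexity

section BlockwiseMinimizers

lemma le_add_fderiv_of_isMinOn_add {E : Type*} [NormedAddCommGroup E] [NormedSpace ℝ E]
    {S : Set E} {f g : E → ℝ} {g' : E →L[ℝ] ℝ} {x v : E} (hf : ConvexOn ℝ S f)
    (hg : HasFDerivAt g g' x) (hmin : IsMinOn (fun z => f z + g z) S x)
    (hx : x ∈ S) (hv : v ∈ S) : f x ≤ f v + g' (v - x) := by
  have hslope : ∀ᶠ t : ℝ in 𝓝[>] 0, f x - f v ≤ t⁻¹ • (g (x + t • (v - x)) - g x) := by
    filter_upwards [Ioo_mem_nhdsGT one_pos] with t ⟨ht, ht1⟩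
    have hmem : x + t • (v - x) ∈ S := hf.1.add_smul_sub_mem hx hv ⟨ht.le, ht1.le⟩
    have hcomb : x + t • (v - x) = (1 - t) • x + t • v := by module
    have hconv : f (x + t • (v - x)) ≤ (1 - t) * f x + t * f v := by
      rw [hcomb]
      exact hf.2 hx hv (sub_nonneg.2 ht1.le) ht.le (sub_add_cancel 1 t)
    have hle : f x + g x ≤ f (x + t • (v - x)) + g (x + t • (v - x)) := hmin hmem
    rw [smul_eq_mul, le_inv_mul_iff₀ ht]
    linarith
  linarith [ge_of_tendsto (hg.hasLineDerivAt (v - x)).tendsto_slope_zero_right hslope]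

lemma add_fderiv_sub_le_of_convexOn {E : Type*} [NormedAddCommGroup E] [NormedSpace ℝ E]
    {S : Set E} {g : E → ℝ} {g' : E →L[ℝ] ℝ} {x v : E} (hg : ConvexOn ℝ S g)
    (hg' : HasFDerivAt g g' x) (hx : x ∈ S) (hv : v ∈ S) : g x + g' (v - x) ≤ g v := by
  -- Every point minimises the constant function `g + (-g)`.
  have hmin : IsMinOn (fun z => g z + (-g) z) S x := fun z _ => by simp
  have h := le_add_fderiv_of_isMinOn_add hg hg'.neg hmin hx hv
  rw [neg_apply] at h
  linarith

variable {ι : Type*} [Fintype ι] [DecidableEq ι] {V : ι → Type*}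

lemma sum_apply_update_add {M : Type*} [AddCommMonoid M] (f : ∀ i, V i → M) (x : ∀ i, V i) (i : ι)
    (v : V i) :
    ∑ j, f j (Function.update x i v j) = f i v + ∑ j ∈ Finset.univ \ {i}, f j (x j) := by
  simp only [Function.apply_update f]
  exact Finset.sum_update_of_mem (Finset.mem_univ i) _ _

lemma isMinOn_block_add_of_isMinOn_update {f : ∀ i, V i → ℝ} {g : (∀ i, V i) → ℝ} {x : ∀ i, V i}
    {i : ι} {S : Set (V i)}
    (hmin : IsMinOn (fun v => ∑ j, f j (Function.update x i v j) + g (Function.update x i v)) S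
      (x i)) :
    IsMinOn (fun v => f i v + g (Function.update x i v)) S (x i) := by
  intro v hv
  have h := hmin hv
  simp only [Set.mem_ofPred_eq, sum_apply_update_add] at h ⊢
  linarith

variable [∀ i, NormedAddCommGroup (V i)] [∀ i, NormedSpace ℝ (V i)]

lemma hasFDerivAt_comp_update {g : (∀ i, V i) → ℝ} {x : ∀ i, V i} (hg : DifferentiableAt ℝ g x)
    (i : ι) :
    HasFDerivAt (fun v => g (Function.update x i v))
      ((fderiv ℝ g x).comp (ContinuousLinearMap.single ℝ V i)) (x i) := by
  have hupdate : HasFDerivAt (Function.update x i) (ContinuousLinearMap.single ℝ V i) (x i) := by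
    convert hasFDerivAt_update x (x i) using 1
    ext v j
    obtain rfl | hj := eq_or_ne j i
    · simp
    · simp [hj]
  refine HasFDerivAt.comp (x i) ?_ hupdate
  rw [Function.update_eq_self]
  exact hg.hasFDerivAt

/- Tseng's observation on coordinate descent: nonsmooth terms are harmless as long as they do not
couple the blocks. -/
theorem isMinOn_of_isMinOn_update {S : ∀ i, Set (V i)} {f : ∀ i, V i → ℝ} {g : (∀ i, V i) → ℝ}
    {x : ∀ i, V i} (hf : ∀ i, ConvexOn ℝ (S i) (f i)) (hg : ConvexOn ℝ (Set.univ.pi S) g)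
    (hdiff : DifferentiableAt ℝ g x) (hx : x ∈ Set.univ.pi S)
    (hmin : ∀ i, IsMinOn
      (fun v => ∑ j, f j (Function.update x i v j) + g (Function.update x i v)) (S i) (x i)) :
    IsMinOn (fun z => ∑ i, f i (z i) + g z) (Set.univ.pi S) x := by
  intro z hz
  have hblock : ∀ i, f i (x i) ≤ f i (z i) + fderiv ℝ g x (Pi.single i (z i - x i)) := fun i => by
    have h := le_add_fderiv_of_isMinOn_add (hf i) (hasFDerivAt_comp_update hdiff i)
      (isMinOn_block_add_of_isMinOn_update (hmin i)) (hx i trivial) (hz i trivial)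
    simpa only [Function.update_eq_self, ContinuousLinearMap.comp_apply,
      ContinuousLinearMap.single_apply] using h
  have hsum : ∑ i, fderiv ℝ g x (Pi.single i (z i - x i)) = fderiv ℝ g x (z - x) := by
    rw [← map_sum]
    exact congrArg _ (Finset.univ_sum_single (z - x))
  calc ∑ i, f i (x i) + g x
      ≤ ∑ i, (f i (z i) + fderiv ℝ g x (Pi.single i (z i - x i))) + g x := by
        gcongr with i
        exact hblock i
    _ = ∑ i, f i (z i) + (g x + fderiv ℝ g x (z - x)) := by
        rw [Finset.sum_add_distrib, hsum]
        ring
    _ ≤ ∑ i, f i (z i) + g z := by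
        gcongr
        exact add_fderiv_sub_le_of_convexOn hg hdiff.hasFDerivAt hx hz

end BlockwiseMinimizers

section FDivergence

open InformationTheory

variable {ι : Type*} [Fintype ι]

/-- The Csiszár `f`-divergence `D_f(ρ | σ) = ∑ i, σ i * f (ρ i / σ i)` of finite weights, for
real-valued `f` and with no recession term, as a function of `ρ`. -/
def fDivergence (f : ℝ → ℝ) (σ ρ : ι → ℝ) : ℝ :=
  ∑ i, σ i * f (ρ i / σ i)

variable {f : ℝ → ℝ} {σ ρ : ι → ℝ}

lemma convexOn_fDivergence (hf : ConvexOn ℝ (Set.Ici 0) f) (hσ : ∀ i, 0 ≤ σ i) :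
    ConvexOn ℝ (Set.Ici 0) (fDivergence f σ) := by
  rw [← Set.pi_univ_Ici]
  exact convexOn_pi_sum fun i => convexOn_mul_comp_div hf (hσ i)

lemma strictConvexOn_fDivergence (hf : StrictConvexOn ℝ (Set.Ici 0) f) (hσ : ∀ i, 0 < σ i) :
    StrictConvexOn ℝ (Set.Ici 0) (fDivergence f σ) := by
  rw [← Set.pi_univ_Ici]
  exact strictConvexOn_pi_sum fun i => strictConvexOn_mul_comp_div hf (hσ i)

lemma differentiableAt_fDivergence (hf : ∀ i, DifferentiableAt ℝ f (ρ i / σ i)) :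
    DifferentiableAt ℝ (fDivergence f σ) ρ := by
  refine DifferentiableAt.fun_sum fun i _ => ?_
  exact ((hf i).comp (f := fun ρ : ι → ℝ => ρ i / σ i) ρ (by fun_prop)).const_mul (σ i)

lemma fDivergence_klFun_segment_le (hσ : ∀ i, 0 < σ i) (hρ : 0 ≤ ρ) {i : ι} (hi : ρ i = 0)
    {s : ℝ} (hs : 0 ≤ s) (hs1 : s ≤ 1) :
    fDivergence klFun σ ((1 - s) • ρ + s • σ) ≤
      (1 - s) * fDivergence klFun σ ρ + σ i * (s * Real.log s) := by
  have hdiv : ∀ j, ((1 - s) • ρ + s • σ) j / σ j = (1 - s) * (ρ j / σ j) + s * 1 := fun j => by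
    have := (hσ j).ne'
    simp only [Pi.add_apply, Pi.smul_apply, smul_eq_mul]
    field_simp
  have hterm : ∀ j, σ j * klFun (((1 - s) • ρ + s • σ) j / σ j) ≤
      (1 - s) * (σ j * klFun (ρ j / σ j)) + if j = i then σ i * (s * Real.log s) else 0 := by
    intro j
    rw [hdiv]
    split_ifs with hj
    · subst hj
      have hzero : klFun s = (1 - s) + s * Real.log s := by
        rw [klFun_apply]
        ring
      rw [hi, zero_div, mul_zero, zero_add, mul_one, hzero, klFun_zero]
      exact le_of_eq (by ring)
    · have hconv := convexOn_klFun.2 (div_nonneg (hρ j) (hσ j).le) (Set.mem_Ici.2 zero_le_one)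
        (sub_nonneg.2 hs1) hs (sub_add_cancel 1 s)
      simp only [smul_eq_mul, klFun_one, mul_zero, add_zero] at hconv
      calc σ j * klFun ((1 - s) * (ρ j / σ j) + s * 1)
          ≤ σ j * ((1 - s) * klFun (ρ j / σ j)) := mul_le_mul_of_nonneg_left hconv (hσ j).le
        _ = (1 - s) * (σ j * klFun (ρ j / σ j)) + 0 := by ring
  calc fDivergence klFun σ ((1 - s) • ρ + s • σ)
      ≤ ∑ j, ((1 - s) * (σ j * klFun (ρ j / σ j)) +
          if j = i then σ i * (s * Real.log s) else 0) := Finset.sum_le_sum fun j _ => hterm j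
    _ = (1 - s) * fDivergence klFun σ ρ + σ i * (s * Real.log s) := by
        rw [Finset.sum_add_distrib, ← Finset.mul_sum, Finset.sum_ite_eq' Finset.univ i,
          if_pos (Finset.mem_univ i), fDivergence]

lemma pos_of_isMinOn_add_klDivergence {h : (ι → ℝ) → ℝ} {ε : ℝ} (hε : 0 < ε) (hσ : ∀ i, 0 < σ i)
    (hh : ConvexOn ℝ (Set.Ici 0) h) (hρ : 0 ≤ ρ)
    (hmin : IsMinOn (fun τ => h τ + ε * fDivergence klFun σ τ) (Set.Ici 0) ρ) (i : ι) :
    0 < ρ i := by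
  refine (hρ i).lt_of_ne' fun hi => ?_
  have hσ0 : 0 ≤ σ := fun j => (hσ j).le
  have hεσ : 0 < ε * σ i := mul_pos hε (hσ i)
  obtain ⟨s, hlog, hs, hs1⟩ := ((Real.tendsto_log_nhdsGT_zero.eventually_lt_atBot
    ((h ρ + ε * fDivergence klFun σ ρ - h σ) / (ε * σ i))).and (Ioo_mem_nhdsGT one_pos)).exists
  have hseg : h ((1 - s) • ρ + s • σ) ≤ (1 - s) * h ρ + s * h σ :=
    hh.2 hρ hσ0 (sub_nonneg.2 hs1.le) hs.le (sub_add_cancel 1 s)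
  have hkl := mul_le_mul_of_nonneg_left
    (fDivergence_klFun_segment_le hσ hρ hi hs.le hs1.le) hε.le
  have hle : h ρ + ε * fDivergence klFun σ ρ ≤
      h ((1 - s) • ρ + s • σ) + ε * fDivergence klFun σ ((1 - s) • ρ + s • σ) :=
    hmin ((convex_Ici 0) hρ hσ0 (sub_nonneg.2 hs1.le) hs.le (sub_add_cancel 1 s))
  rw [lt_div_iff₀ hεσ] at hlog
  -- Moving from `ρ` to `σ` changes the convex part by `O(s)` and gains `s * log s` at `i`.
  have hneg : s * (h σ - (h ρ + ε * fDivergence klFun σ ρ) + ε * σ i * Real.log s) < 0 :=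
    mul_neg_of_pos_of_neg hs (by linarith)
  linarith

end FDivergence

section RealObjective

open InformationTheory

variable {X Y : Type*} [Fintype X] [Fintype Y]

/-- The terms of the unbalanced objective that involve a single row `r` of the plan, of mass `m`:
linear cost, first marginal penalty and entropic regularisation. -/
def rowCost (c : Y → ℝ) (ε : ℝ) (f : ℝ → ℝ) (m : ℝ) (ν r : Y → ℝ) : ℝ :=
  ∑ y, c y * r y + m * f ((∑ y, r y) / m) + ε * fDivergence klFun (fun y => m * ν y) r

/-- The real value of `EJfun` when both marginal entropies are finite on `[0,∞)`: the row costs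
plus the penalty on the second marginal, which is the only term coupling the rows. -/
def planCost (c : X → Y → ℝ) (ε : ℝ) (f₁ f₂ : ℝ → ℝ) (μ : X → ℝ) (ν νm : Y → ℝ)
    (π : X → Y → ℝ) : ℝ :=
  ∑ x, rowCost (c x) ε f₁ (μ x) ν (π x) + fDivergence f₂ ν (∑ x, π x + νm)

variable {c : X → Y → ℝ} {ε : ℝ} {f₁ f₂ : ℝ → ℝ} {μ : X → ℝ} {ν νm : Y → ℝ} {π : X → Y → ℝ}

lemma convexOn_linear_add_mass {f : ℝ → ℝ} (hf : ConvexOn ℝ (Set.Ici 0) f) {m : ℝ} (hm : 0 ≤ m)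
    (c : Y → ℝ) :
    ConvexOn ℝ (Set.Ici 0) fun r : Y → ℝ => ∑ y, c y * r y + m * f ((∑ y, r y) / m) := by
  have hlin : ConvexOn ℝ (Set.Ici 0) fun r : Y → ℝ => ∑ y, c y * r y :=
    (Fintype.linearCombination ℝ c).convexOn (convex_Ici 0) |>.congr fun r _ => by
      simp [Fintype.linearCombination_apply, mul_comm]
  have hmass := ((convexOn_mul_comp_div hf hm).comp_linearMap
    (∑ y, LinearMap.proj y : (Y → ℝ) →ₗ[ℝ] ℝ)).subset
      (fun r hr => by simpa using Finset.sum_nonneg fun y _ => hr y) (convex_Ici 0)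
  exact hlin.add (hmass.congr fun r _ => by simp)

lemma strictConvexOn_rowCost {f : ℝ → ℝ} (hf : ConvexOn ℝ (Set.Ici 0) f) (hε : 0 < ε) {m : ℝ}
    (hm : 0 < m) (hν : ∀ y, 0 < ν y) (c : Y → ℝ) :
    StrictConvexOn ℝ (Set.Ici 0) (rowCost c ε f m ν) := by
  have hkl := strictConvexOn_fDivergence strictConvexOn_klFun fun y => mul_pos hm (hν y)
  refine (convexOn_linear_add_mass hf hm.le c).add_strictConvexOn
    ⟨hkl.1, fun r hr s hs hrs a b ha hb hab => ?_⟩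
  calc ε * fDivergence klFun (fun y => m * ν y) (a • r + b • s)
      < ε * (a • fDivergence klFun (fun y => m * ν y) r +
          b • fDivergence klFun (fun y => m * ν y) s) :=
        mul_lt_mul_of_pos_left (hkl.2 hr hs hrs ha hb hab) hε
    _ = a • (ε * fDivergence klFun (fun y => m * ν y) r) +
          b • (ε * fDivergence klFun (fun y => m * ν y) s) := by
        simp only [smul_eq_mul]
        ring

lemma convexOn_columnPenalty (hf₂ : ConvexOn ℝ (Set.Ici 0) f₂) (hν : ∀ y, 0 ≤ ν y)
    (hνm : 0 ≤ νm) :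
    ConvexOn ℝ (Set.Ici 0) fun π : X → Y → ℝ => fDivergence f₂ ν (∑ x, π x + νm) := by
  have h := ((convexOn_fDivergence hf₂ hν).translate_right νm).comp_linearMap
    (∑ x, LinearMap.proj x : (X → Y → ℝ) →ₗ[ℝ] Y → ℝ)
  refine (h.subset (fun π hπ => ?_) (convex_Ici 0)).congr fun π _ => by
    simp [add_comm νm]
  have hcolumn : νm + ∑ x, π x ∈ Set.Ici 0 := add_nonneg hνm (Finset.sum_nonneg fun x _ => hπ x)
  simpa only [Set.mem_preimage, LinearMap.sum_apply, LinearMap.proj_apply] using hcolumn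

lemma strictConvexOn_planCost (hε : 0 < ε) (hμ : ∀ x, 0 < μ x) (hν : ∀ y, 0 < ν y)
    (hf₁ : ConvexOn ℝ (Set.Ici 0) f₁) (hf₂ : ConvexOn ℝ (Set.Ici 0) f₂) (hνm : 0 ≤ νm) :
    StrictConvexOn ℝ (Set.Ici 0) (planCost c ε f₁ f₂ μ ν νm) := by
  refine StrictConvexOn.add_convexOn ?_ (convexOn_columnPenalty hf₂ (fun y => (hν y).le) hνm)
  rw [← Set.pi_univ_Ici]
  exact strictConvexOn_pi_sum fun x => strictConvexOn_rowCost hf₁ hε (hμ x) hν (c x)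

lemma pos_of_isMinOn_planCost_update [DecidableEq X] (hε : 0 < ε) (hμ : ∀ x, 0 < μ x)
    (hν : ∀ y, 0 < ν y) (hf₁ : ConvexOn ℝ (Set.Ici 0) f₁) (hf₂ : ConvexOn ℝ (Set.Ici 0) f₂)
    (hνm : 0 ≤ νm) (hπ : 0 ≤ π) {x : X}
    (hmin : IsMinOn (fun r => planCost c ε f₁ f₂ μ ν νm (Function.update π x r)) (Set.Ici 0)
      (π x)) (y : Y) : 0 < π x y := by
  have hcolumn := convexOn_columnPenalty (X := X) hf₂ (fun y => (hν y).le) hνm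
  rw [← Set.pi_univ_Ici] at hcolumn
  have hconv := (convexOn_linear_add_mass hf₁ (hμ x).le (c x)).add
    (convexOn_comp_update hcolumn (fun x _ => hπ x) x)
  refine pos_of_isMinOn_add_klDivergence hε (fun y => mul_pos (hμ x) (hν y)) hconv (hπ x) ?_ y
  convert isMinOn_block_add_of_isMinOn_update (f := fun x => rowCost (c x) ε f₁ (μ x) ν)
    (g := fun π => fDivergence f₂ ν (∑ x, π x + νm)) hmin
    using 2 with r
  simp only [Pi.add_apply, rowCost]
  ring

theorem isMinOn_planCost_of_isMinOn_update [Nonempty X] [DecidableEq X] (hε : 0 < ε)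
    (hμ : ∀ x, 0 < μ x) (hν : ∀ y, 0 < ν y) (hf₁ : ConvexOn ℝ (Set.Ici 0) f₁)
    (hf₂ : ConvexOn ℝ (Set.Ici 0) f₂) (hdiff : DifferentiableOn ℝ f₂ (Set.Ioi 0))
    (hνm : 0 ≤ νm) (hπ : 0 ≤ π)
    (hmin : ∀ x, IsMinOn (fun r => planCost c ε f₁ f₂ μ ν νm (Function.update π x r))
      (Set.Ici 0) (π x)) :
    IsMinOn (planCost c ε f₁ f₂ μ ν νm) (Set.Ici 0) π := by
  have hpos : ∀ x y, 0 < π x y := fun x =>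
    pos_of_isMinOn_planCost_update hε hμ hν hf₁ hf₂ hνm hπ (hmin x)
  have hcolumn : ∀ y, 0 < (∑ x, π x + νm) y := fun y => by
    rw [Pi.add_apply, Finset.sum_apply]
    exact add_pos_of_pos_of_nonneg
      (Finset.sum_pos (fun x _ => hpos x y) Finset.univ_nonempty) (hνm y)
  have hdiffπ : DifferentiableAt ℝ (fun π : X → Y → ℝ => fDivergence f₂ ν (∑ x, π x + νm)) π :=
    DifferentiableAt.comp (g := fDivergence f₂ ν) π
      (differentiableAt_fDivergence fun y =>
        hdiff.differentiableAt (Ioi_mem_nhds (div_pos (hcolumn y) (hν y))))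
      (by fun_prop)
  have hconv := convexOn_columnPenalty (X := X) hf₂ (fun y => (hν y).le) hνm
  rw [← Set.pi_univ_Ici] at hconv ⊢
  exact isMinOn_of_isMinOn_update
    (fun x => (strictConvexOn_rowCost hf₁ hε (hμ x) hν (c x)).convexOn) hconv hdiffπ
    (fun x _ => hπ x) hmin

end RealObjective

section Cells

variable {X Y : Type*}

lemma indicator_compl_apply_update [DecidableEq X] {β M : Type*} [Zero M] {J : Set X} {x : X}
    (hx : x ∈ J) (F : X → β → M) (π : X → β) (b : β) :
    (Jᶜ.indicator fun z => F z (Function.update π x b z)) = Jᶜ.indicator fun z => F z (π z) :=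
  Set.indicator_congr fun z hz => by
    rw [Function.update_of_ne (ne_of_mem_of_not_mem hx hz).symm]

variable [Fintype X]

lemma sum_coe_add_sum_indicator_compl {M : Type*} [AddCommMonoid M] (J : Set X) (f : X → M) :
    ∑ j : J, f j + ∑ x, Jᶜ.indicator f x = ∑ x, f x := by
  have hJ : ∑ j : J, f j = ∑ x, J.indicator f x := by
    rw [Finset.sum_set_coe, ← Finset.sum_indicator_subset f (Finset.subset_univ _),
      Set.coe_toFinset]
  rw [hJ, ← Finset.sum_add_distrib]
  exact Finset.sum_congr rfl fun x _ => Set.indicator_self_add_compl_apply J f x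

lemma sum_coe_add_outMarg (J : Set X) (π : X → Y → ℝ) :
    ∑ j : J, π j + outMarg J π = ∑ x, π x := by
  ext y
  simpa only [Pi.add_apply, Finset.sum_apply, outMarg] using
    sum_coe_add_sum_indicator_compl J fun x => π x y

lemma outMarg_nonneg (J : Set X) {π : X → Y → ℝ} (hπ : 0 ≤ π) : 0 ≤ outMarg J π := fun y =>
  Finset.sum_nonneg fun x _ => Set.indicator_nonneg (fun x _ => hπ x y) x

lemma outMarg_update_of_mem [DecidableEq X] {J : Set X} {x : X} (hx : x ∈ J) (π : X → Y → ℝ)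
    (r : Y → ℝ) : outMarg J (Function.update π x r) = outMarg J π :=
  funext fun y => Finset.sum_congr rfl fun z _ =>
    congrFun (indicator_compl_apply_update hx (fun _ r => r y) π r) z

lemma planCost_cell_add [Fintype Y] {c : X → Y → ℝ} {ε : ℝ} {f₁ f₂ : ℝ → ℝ} {μ : X → ℝ}
    {ν : Y → ℝ} (J : Set X) (π : X → Y → ℝ) :
    planCost (fun j : J => c j) ε f₁ f₂ (fun j : J => μ j) ν (outMarg J π) (fun j : J => π j) +
      ∑ x, Jᶜ.indicator (fun x => rowCost (c x) ε f₁ (μ x) ν (π x)) x =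
    planCost c ε f₁ f₂ μ ν 0 π := by
  rw [planCost, planCost, sum_coe_add_outMarg, add_right_comm, add_zero,
    sum_coe_add_sum_indicator_compl J fun x => rowCost (c x) ε f₁ (μ x) ν (π x)]

lemma isMinOn_planCost_update_of_cell [Fintype Y] [DecidableEq X] {c : X → Y → ℝ} {ε : ℝ}
    {f₁ f₂ : ℝ → ℝ} {μ : X → ℝ} {ν : Y → ℝ} {π : X → Y → ℝ} (hπ : 0 ≤ π) {J : Set X} {x : X}
    (hx : x ∈ J)
    (hmin : IsMinOn
      (planCost (fun j : J => c j) ε f₁ f₂ (fun j : J => μ j) ν (outMarg J π)) (Set.Ici 0)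
      fun j : J => π j) :
    IsMinOn (fun r => planCost c ε f₁ f₂ μ ν 0 (Function.update π x r)) (Set.Ici 0) (π x) := by
  intro r hr
  have hupdate : 0 ≤ Function.update π x r := le_update_iff.2 ⟨hr, fun z _ => hπ z⟩
  have hcell := hmin (show (fun j : J => Function.update π x r j) ∈ Set.Ici 0 from
    fun j => hupdate j)
  simp only [Set.mem_ofPred_eq, Function.update_eq_self] at hcell ⊢
  rw [← planCost_cell_add J π, ← planCost_cell_add J (Function.update π x r),
    outMarg_update_of_mem hx,
    indicator_compl_apply_update hx fun z => rowCost (c z) ε f₁ (μ z) ν]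
  exact add_le_add_left hcell _

end Cells

section ExtendedReal

open InformationTheory

lemma ereal_coe_sum {ι : Type*} (s : Finset ι) (f : ι → ℝ) :
    ((∑ i ∈ s, f i : ℝ) : EReal) = ∑ i ∈ s, (f i : EReal) :=
  map_sum (⟨⟨Real.toEReal, EReal.coe_zero⟩, EReal.coe_add⟩ : ℝ →+ EReal) f s

variable {φ φ₁ φ₂ : ℝ → EReal}

lemma coe_toReal_of_isEntropyFn (hφ : IsEntropyFn φ) (hfin : ∀ s, 0 ≤ s → φ s ≠ ⊤) {s : ℝ}
    (hs : 0 ≤ s) : ((φ s).toReal : EReal) = φ s :=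
  EReal.coe_toReal (hfin s hs) (hφ.2.2.1 s)

lemma convexOn_toReal_of_isEntropyFn (hφ : IsEntropyFn φ) (hfin : ∀ s, 0 ≤ s → φ s ≠ ⊤) :
    ConvexOn ℝ (Set.Ici 0) fun s => (φ s).toReal := by
  refine ⟨convex_Ici 0, fun s hs t ht a b ha hb hab => ?_⟩
  have hconv := hφ.2.1 s t a b ha hb hab
  rw [← coe_toReal_of_isEntropyFn hφ hfin hs, ← coe_toReal_of_isEntropyFn hφ hfin ht,
    ← coe_toReal_of_isEntropyFn hφ hfin
      (add_nonneg (mul_nonneg ha hs) (mul_nonneg hb ht))] at hconv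
  exact_mod_cast hconv

lemma divergence_eq_coe {ι : Type*} [Fintype ι] (hφ : IsEntropyFn φ)
    (hfin : ∀ s, 0 ≤ s → φ s ≠ ⊤) {ρ σ : ι → ℝ} (hρ : 0 ≤ ρ) (hσ : ∀ i, 0 < σ i) :
    divergence φ ρ σ = (fDivergence (fun s => (φ s).toReal) σ ρ : ℝ) := by
  have hsingular : (∑ i, if σ i = 0 then ρ i else 0) = 0 :=
    Finset.sum_eq_zero fun i _ => if_neg (hσ i).ne'
  rw [divergence, hsingular, EReal.coe_zero, mul_zero, add_zero, fDivergence, ereal_coe_sum]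
  refine Finset.sum_congr rfl fun i _ => ?_
  rw [if_pos (hσ i), EReal.coe_mul,
    coe_toReal_of_isEntropyFn hφ hfin (div_nonneg (hρ i) (hσ i).le)]

lemma KLfin_eq_coe {ι : Type*} [Fintype ι] (ρ : ι → ℝ) {σ : ι → ℝ} (hσ : ∀ i, σ i ≠ 0) :
    KLfin ρ σ = (fDivergence klFun σ ρ : ℝ) := by
  rw [KLfin, if_pos fun i hi => absurd hi (hσ i), fDivergence]
  refine congrArg _ (Finset.sum_congr rfl fun i _ => ?_)
  have := hσ i
  rw [klFun_apply]
  field_simp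
  ring

lemma EJfun_eq_coe {X Y : Type*} [Fintype X] [Fintype Y] (c : X → Y → ℝ) (ε : ℝ)
    (h₁ : IsEntropyFn φ₁) (hfin₁ : ∀ s, 0 ≤ s → φ₁ s ≠ ⊤)
    (h₂ : IsEntropyFn φ₂) (hfin₂ : ∀ s, 0 ≤ s → φ₂ s ≠ ⊤)
    {μ : X → ℝ} {ν νm : Y → ℝ} (hμ : ∀ x, 0 < μ x) (hν : ∀ y, 0 < ν y) (hνm : 0 ≤ νm)
    {π : X → Y → ℝ} (hπ : 0 ≤ π) :
    EJfun c ε φ₁ φ₂ μ ν νm π =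
      (planCost c ε (fun s => (φ₁ s).toReal) (fun s => (φ₂ s).toReal) μ ν νm π : ℝ) := by
  have hcolumn : (fun y => ∑ x, π x y + νm y) = ∑ x, π x + νm := by
    ext y
    rw [Pi.add_apply, Finset.sum_apply]
  rw [EJfun, hcolumn, divergence_eq_coe h₁ hfin₁ (fun x => Finset.sum_nonneg fun y _ => hπ x y) hμ,
    divergence_eq_coe h₂ hfin₂ (add_nonneg (Finset.sum_nonneg fun x _ => hπ x) hνm) hν,
    KLfin_eq_coe _ fun p : X × Y => (mul_pos (hμ p.1) (hν p.2)).ne']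
  norm_cast
  simp only [planCost, rowCost, fDivergence, Fintype.sum_prod_type, Finset.mul_sum,
    Finset.sum_add_distrib]
  ring

lemma isMinOn_EJfun_iff {X Y : Type*} [Fintype X] [Fintype Y] {c : X → Y → ℝ} {ε : ℝ}
    (h₁ : IsEntropyFn φ₁) (hfin₁ : ∀ s, 0 ≤ s → φ₁ s ≠ ⊤)
    (h₂ : IsEntropyFn φ₂) (hfin₂ : ∀ s, 0 ≤ s → φ₂ s ≠ ⊤)
    {μ : X → ℝ} {ν νm : Y → ℝ} (hμ : ∀ x, 0 < μ x) (hν : ∀ y, 0 < ν y) (hνm : 0 ≤ νm)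
    {π : X → Y → ℝ} (hπ : 0 ≤ π) :
    IsMinOn (EJfun c ε φ₁ φ₂ μ ν νm) (Set.Ici 0) π ↔
      IsMinOn (planCost c ε (fun s => (φ₁ s).toReal) (fun s => (φ₂ s).toReal) μ ν νm)
        (Set.Ici 0) π := by
  simp only [isMinOn_iff]
  refine forall₂_congr fun π' hπ' => ?_
  rw [EJfun_eq_coe c ε h₁ hfin₁ h₂ hfin₂ hμ hν hνm hπ,
    EJfun_eq_coe c ε h₁ hfin₁ h₂ hfin₂ hμ hν hνm hπ', EReal.coe_le_coe_iff]

end ExtendedReal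

theorem cellwise_optimal_implies_globally_optimal_general
    {X Y : Type*} [Fintype X] [Fintype Y] [Nonempty X]
    (μ : X → ℝ) (ν : Y → ℝ) (hμ : ∀ x, 0 < μ x) (hν : ∀ y, 0 < ν y)
    (c : X → Y → ℝ) (ε : ℝ) (hε : 0 < ε) (φ₁ φ₂ : ℝ → EReal)
    (h₁ : IsEntropyFn φ₁) (hfin₁ : ∀ s, 0 ≤ s → φ₁ s ≠ ⊤)
    (h₂ : IsEntropyFn φ₂) (hfin₂ : ∀ s, 0 ≤ s → φ₂ s ≠ ⊤)
    (hdiff₂ : DifferentiableOn ℝ (fun s => (φ₂ s).toReal) (Set.Ioi 0))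
    (𝒥 : Set (Set X)) (h𝒥 : ⋃₀ 𝒥 = Set.univ) (π : X → Y → ℝ) (hπ : 0 ≤ π)
    (hopt : ∀ J ∈ 𝒥, IsMinOn
      (EJfun (fun j : J => c j) ε φ₁ φ₂ (fun j : J => μ j) ν (outMarg J π)) (Set.Ici 0)
      fun j : J => π j) :
    IsMinOn (Eglobal c ε φ₁ φ₂ μ ν) (Set.Ici 0) π ∧
      ∀ π' ∈ Set.Ici 0, IsMinOn (Eglobal c ε φ₁ φ₂ μ ν) (Set.Ici 0) π' → π' = π := by
  have hf₁ := convexOn_toReal_of_isEntropyFn h₁ hfin₁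
  have hf₂ := convexOn_toReal_of_isEntropyFn h₂ hfin₂
  have hglobal : ∀ ρ ∈ Set.Ici 0, IsMinOn (Eglobal c ε φ₁ φ₂ μ ν) (Set.Ici 0) ρ ↔
      IsMinOn (planCost c ε (fun s => (φ₁ s).toReal) (fun s => (φ₂ s).toReal) μ ν 0)
        (Set.Ici 0) ρ :=
    fun ρ hρ => isMinOn_EJfun_iff h₁ hfin₁ h₂ hfin₂ hμ hν le_rfl hρ
  have hrow : ∀ x, IsMinOn (fun r => planCost c ε (fun s => (φ₁ s).toReal)
      (fun s => (φ₂ s).toReal) μ ν 0 (Function.update π x r)) (Set.Ici 0) (π x) := fun x => by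
    obtain ⟨J, hJ, hx⟩ := Set.mem_sUnion.1 (h𝒥 ▸ Set.mem_univ x)
    have hcell := (isMinOn_EJfun_iff (μ := fun j : J => μ j) (π := fun j : J => π j) h₁ hfin₁ h₂
      hfin₂ (fun j => hμ j) hν (outMarg_nonneg J hπ) fun j => hπ j).1 (hopt J hJ)
    exact isMinOn_planCost_update_of_cell hπ hx hcell
  have hmin := isMinOn_planCost_of_isMinOn_update hε hμ hν hf₁ hf₂ hdiff₂ le_rfl hπ hrow
  exact ⟨(hglobal π hπ).2 hmin, fun ρ hρ hρmin =>
    (strictConvexOn_planCost hε hμ hν hf₁ hf₂ le_rfl).eq_of_isMinOn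
      ((hglobal ρ hρ).1 hρmin) hmin hρ hπ⟩

/-- if the restriction of a nonnegative plan `π` to each cell of a
partition `𝒥` of `X` minimizes the corresponding cell subproblem, then `π` is
the unique global minimizer of the unbalanced objective `E`. -/
theorem cellwise_optimal_implies_globally_optimal
    {X Y : Type*} [Fintype X] [Fintype Y] [Nonempty X] [Nonempty Y]
    (μ : X → ℝ) (ν : Y → ℝ) (hμ : ∀ x, 0 < μ x) (hν : ∀ y, 0 < ν y)
    (c : X → Y → ℝ) (ε : ℝ) (hε : 0 < ε)
    (φ₁ φ₂ : ℝ → EReal) (h₁ : AssumptionA φ₁) (h₂ : AssumptionA φ₂)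
    (𝒥 : Set (Set X)) (h𝒥 : Setoid.IsPartition 𝒥)
    (π : X → Y → ℝ) (hπ : ∀ x y, 0 ≤ π x y)
    (hopt : ∀ J ∈ 𝒥, ∀ π' : ↥J → Y → ℝ, (∀ (j : J) (y : Y), 0 ≤ π' j y) →
      EJfun (fun (j : J) y => c j y) ε φ₁ φ₂ (fun (j : J) => μ j) ν
          (outMarg J π) (fun (j : J) y => π j y)
        ≤ EJfun (fun (j : J) y => c j y) ε φ₁ φ₂ (fun (j : J) => μ j) ν
          (outMarg J π) π') :
    (∀ π' : X → Y → ℝ, (∀ x y, 0 ≤ π' x y) →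
        Eglobal c ε φ₁ φ₂ μ ν π ≤ Eglobal c ε φ₁ φ₂ μ ν π') ∧
    ∀ π' : X → Y → ℝ, (∀ x y, 0 ≤ π' x y) →
      (∀ π'' : X → Y → ℝ, (∀ x y, 0 ≤ π'' x y) →
          Eglobal c ε φ₁ φ₂ μ ν π' ≤ Eglobal c ε φ₁ φ₂ μ ν π'') →
      π' = π := by
  have hcover : ⋃₀ 𝒥 = Set.univ := h𝒥.sUnion_eq_univ
  exact cellwise_optimal_implies_globally_optimal_general μ ν hμ hν c ε hε φ₁ φ₂ h₁.1 h₁.2.2.1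
    h₂.1 h₂.2.2.1 (h₂.2.2.2.differentiableOn one_ne_zero) 𝒥 hcover π hπ hopt

end
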